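/- arXiv:1601.08185 — 2 statements merged into one kernel-verified Lean document; each statement's English description precedes it below -/
import Mathlib

section
/- For every natural number n ≥ 15, σ(n+2, 10^(35n²)) ≤ σ(n+3, 8). -/
/-!
The inequality is purely combinatorial. Put `d = n + 2` and `K = 10 ^ (35 n²)`. Every `K`-colouring
`f` of `d`-subsets is turned into an `8`-colouring of `(d+1)`-subsets such that a large homogeneous
set for the latter gives one for the former (`PH_of_hasColouring`). Fix a threshold `M > K + 2d + 1`.

* A set of `d+1` elements above `M` is coloured by comparing (`<`, `=`, `>`) the `f`-colours of
  its first `d` and last `d` elements, after translation by `-d`. A large homogeneous set above `M`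
  has at least `M` elements, so it has no strictly monotone chain of window colours; hence
  consecutive windows have equal colours, and `f` is constant on the `d`-subsets that avoid the `d`
  largest elements. Translating by `-d` compensates for the loss of `d` elements.
* A set below `M` is coloured with `7` colours so that no `(d+2)`-set is homogeneous
  (`HasColouring`). Starting from the trivial colouring of the `(n+1)`-subsets of an `(n+1)`-element
  set, the Erdős–Hajnal stepping-up method is applied twice, each time with three new colours
  (`HasColouring.step`). This reaches `M = 2 ^ 2 ^ (n + 1)`, which exceeds `K + 2d + 1` for `n ≥ 15`
  (`threshold_le`).
* Sets meeting both sides are coloured by the number of their elements below `M`, so that no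
  homogeneous set meets both sides.

As `sigmaPH` is an infimum of naturals, the Paris–Harrington theorem itself (`exists_PH`) is needed
to know that `sigmaPH (n + 3) 8` has the Ramsey property.
-/

open Ordinal
open scoped Classical

noncomputable section

/-- `omegaTower m α` is `ω_m^α`: the `m`-fold iterated `ω`-power tower on top of `α`. -/
noncomputable def omegaTower : ℕ → Ordinal.{0} → Ordinal.{0}
  | 0, α => α
  | m + 1, α => omega0 ^ (omegaTower m α)

/-- `ε₀`, the least ordinal `ε` with `ω ^ ε = ε`. -/
noncomputable def eps0 : Ordinal.{0} := Ordinal.nfp (fun a => omega0 ^ a) 0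

/-- The fundamental sequence `{α}(n)` for ordinals below `ε₀`:
`{0}(n) = 0`, `{β+1}(n) = β`, and for a limit `α = β + ω^γ·(k+1)` (with `γ > 0` the least
exponent of the Cantor normal form) we set `{α}(n) = β + ω^γ·k + ω^δ·(n+1)` if `γ = δ+1`
and `{α}(n) = β + ω^γ·k + ω^{{γ}(n)}` if `γ` is a limit.  Here `γ` is recovered as the
largest exponent with `ω^γ ∣ α`, and `β + ω^γ·k = ω^γ · pred (α / ω^γ)`. -/
noncomputable def fundSeq (α : Ordinal.{0}) (n : ℕ) : Ordinal.{0} :=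
  if _h0 : α = 0 then 0
  else if hs : ∃ β, α = β + 1 then Classical.choose hs
  else
    let γ : Ordinal := sSup {c : Ordinal | omega0 ^ c ∣ α}
    if hγ : ∃ δ, γ = δ + 1 then
      omega0 ^ γ * Ordinal.pred (α / omega0 ^ γ) +
        omega0 ^ (Classical.choose hγ) * ((n : Ordinal) + 1)
    else if hlt : γ < α then
      omega0 ^ γ * Ordinal.pred (α / omega0 ^ γ) + omega0 ^ (fundSeq γ n)
    else 0
termination_by α
decreasing_by exact hlt

/-- The step-down relation `β →_n γ`: there is a finite sequence from `β` to `γ`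
each step of which descends to the `n`-th member of the fundamental sequence. -/
def stepDown (n : ℕ) (β γ : Ordinal.{0}) : Prop :=
  Relation.ReflTransGen (fun a b => fundSeq a n = b) β γ

/-- The fast-growing hierarchy `F_α` for `α < ε₀`:
`F_0(x) = x+1`, `F_{α+1}(x) = F_α^[x+1](x)`, `F_λ(x) = F_{{λ}(x)}(x)` for limits. -/
noncomputable def fgh (α : Ordinal.{0}) : ℕ → ℕ :=
  if _h0 : α = 0 then fun x => x + 1
  else if hs : ∃ β, α = β + 1 then fun x => (fgh (Classical.choose hs))^[x + 1] x
  else fun x => if hlt : fundSeq α x < α then fgh (fundSeq α x) x else 0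
termination_by α
decreasing_by
  · calc Classical.choose hs < Classical.choose hs + 1 := by
          rw [Ordinal.add_one_eq_succ]; exact Order.lt_succ _
      _ = α := (Classical.choose_spec hs).symm
  · exact hlt

/-- `F_{ε₀}(x) := F_{ω_{x+1}}(x)`. -/
noncomputable def Feps0 (x : ℕ) : ℕ := fgh (omegaTower (x + 1) 1) x

/-- The inverse `F_{ε₀}^{-1}(x) := max({z ≤ x : F_{ε₀}(z) ≤ x} ∪ {0})`. -/
noncomputable def Feps0Inv (x : ℕ) : ℕ :=
  sSup ({z : ℕ | z ≤ x ∧ Feps0 z ≤ x} ∪ {0})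

/-- The slow function `F^⋄_{ε₀}(x) := F_{ω_{F_{ε₀}^{-1}(x)+1}}(x)`. -/
noncomputable def slowFeps0 (x : ℕ) : ℕ := fgh (omegaTower (Feps0Inv x + 1) 1) x

/-- The slow hierarchy `F^⋄_{ε₀+α}` for `α < ε₀`:
`F^⋄_{ε₀+0} = F^⋄_{ε₀}`, `F^⋄_{ε₀+α+1}(n) = (F^⋄_{ε₀+α})^[n+1](n)`, and
`F^⋄_{ε₀+λ}(n) = F^⋄_{ε₀+{λ}(n)}(n)` for limits `λ`. -/
noncomputable def slowF (α : Ordinal.{0}) : ℕ → ℕ :=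
  if _h0 : α = 0 then slowFeps0
  else if hs : ∃ β, α = β + 1 then fun n => (slowF (Classical.choose hs))^[n + 1] n
  else fun n => if hlt : fundSeq α n < α then slowF (fundSeq α n) n else 0
termination_by α
decreasing_by
  · calc Classical.choose hs < Classical.choose hs + 1 := by
          rw [Ordinal.add_one_eq_succ]; exact Order.lt_succ _
      _ = α := (Classical.choose_spec hs).symm
  · exact hlt

/-- A nonempty finite set of naturals is *large* if its cardinality is at least
its minimum. -/
def IsLargeSet (Y : Finset ℕ) : Prop := ∃ hY : Y.Nonempty, Y.min' hY ≤ Y.card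

/-- The Paris–Harrington statement `PH(k, m, n, N)`: every `k`-colouring of the
`n`-element subsets of `{0, …, N-1}` admits a large homogeneous set with at least
`m` elements. -/
def PH (k m n N : ℕ) : Prop :=
  ∀ f : Finset ℕ → Fin k,
    ∃ Y : Finset ℕ, Y ⊆ Finset.range N ∧ m ≤ Y.card ∧ IsLargeSet Y ∧
      ∀ s t : Finset ℕ, s ⊆ Y → t ⊆ Y → s.card = n → t.card = n → f s = f t

/-- `σ(n, k)`: the least `N` such that every `k`-colouring of the `n`-element subsets of
`{0, …, N-1}` admits a large homogeneous set with at least `n+1` elements. -/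
noncomputable def sigmaPH (n k : ℕ) : ℕ := sInf {N | PH k (n + 1) n N}

/-! ### Increasing enumerations -/

/-- The increasing enumeration `i ↦ (i-th element of s)` of a finite set of naturals,
padded with `0` beyond the cardinality. -/
def ascEnum (s : Finset ℕ) (i : ℕ) : ℕ :=
  if h : i < s.card then s.orderEmbOfFin rfl ⟨i, h⟩ else 0

lemma ascEnum_mem {s : Finset ℕ} {i : ℕ} (h : i < s.card) : ascEnum s i ∈ s := by
  simp [ascEnum, h]

lemma ascEnum_lt {s : Finset ℕ} {i j : ℕ} (hij : i < j) (h : j < s.card) :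
    ascEnum s i < ascEnum s j := by
  simp [ascEnum, h, hij.trans h, hij]

lemma exists_ascEnum {s : Finset ℕ} {x : ℕ} (hx : x ∈ s) : ∃ i < s.card, ascEnum s i = x := by
  have : x ∈ Set.range (s.orderEmbOfFin rfl) := by simpa using hx
  obtain ⟨i, hi⟩ := this
  exact ⟨i, i.2, by simp [ascEnum, hi]⟩

lemma card_image_range {x : ℕ → ℕ} {k : ℕ} (hx : ∀ i j, i < j → j < k → x i < x j) :
    ((Finset.range k).image x).card = k := by
  rw [Finset.card_image_of_injOn, Finset.card_range]
  intro i hi j hj h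
  simp only [Finset.coe_range, Set.mem_Iio] at hi hj
  rcases lt_trichotomy i j with h1 | h1 | h1
  · have := hx i j h1 hj; omega
  · exact h1
  · have := hx j i h1 hi; omega

lemma ascEnum_image {x : ℕ → ℕ} {k : ℕ} (hx : ∀ i j, i < j → j < k → x i < x j)
    {i : ℕ} (hi : i < k) : ascEnum ((Finset.range k).image x) i = x i := by
  have hc := card_image_range hx
  have := Finset.orderEmbOfFin_unique (s := (Finset.range k).image x) rfl
    (f := fun i => x i.1) (fun i => Finset.mem_image_of_mem _ (by
      have := i.2; simp only [Finset.mem_range]; omega)) (fun i j hij => hx _ _ hij (by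
        have := j.2; omega))
  have h2 : i < ((Finset.range k).image x).card := by omega
  have := congrFun this ⟨i, h2⟩
  simp only [ascEnum, h2, dif_pos]
  exact this.symm

lemma image_ascEnum (s : Finset ℕ) : (Finset.range s.card).image (ascEnum s) = s := by
  ext x
  simp only [Finset.mem_image, Finset.mem_range]
  constructor
  · rintro ⟨i, hi, rfl⟩; exact ascEnum_mem hi
  · exact exists_ascEnum

/-- The index map skipping `i`, so that `x ∘ del i` is the sequence `x` with its `i`-th term
deleted. -/
def del (i j : ℕ) : ℕ := if j < i then j else j + 1

/-! ### Stepping up -/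

/-- There is a `c`-colouring of the `k`-subsets of `{0, …, M-1}` without homogeneous sets of
size `k+1`.  A `k`-subset is given by (the first `k` terms of) its increasing enumeration,
and the second clause says that the remaining terms are irrelevant. -/
def HasColouring (k M c : ℕ) : Prop :=
  ∃ G : (ℕ → ℕ) → ℕ, (∀ x, G x < c) ∧ (∀ x x', (∀ i < k, x i = x' i) → G x = G x') ∧
    ∀ x : ℕ → ℕ, (∀ i j, i < j → j ≤ k → x i < x j) → (∀ i ≤ k, x i < M) →
      ∃ i ≤ k, ∃ j ≤ k, G (x ∘ del i) ≠ G (x ∘ del j)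

/-- With only `k` points there is no `(k+1)`-subset at all. -/
lemma hasColouring_self (k : ℕ) : HasColouring k k 1 := by
  refine ⟨fun _ => 0, by simp, by simp, fun x hx hM => ?_⟩
  exfalso
  have : ∀ i ≤ k, i ≤ x i := by
    intro i
    induction i with
    | zero => simp
    | succ i ih =>
      intro hi
      have := ih (by omega)
      have := hx i (i + 1) (by omega) hi
      omega
  have := this k le_rfl
  have := hM k le_rfl
  omega

/-- The least `t` such that `x` and `y` agree in all binary digits from position `t` on; for
`x ≠ y` this is one more than the highest position where they differ. -/
def splitLevel (x y : ℕ) : ℕ := sInf {t | x / 2 ^ t = y / 2 ^ t}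

lemma splitLevel_le_iff {x y t : ℕ} : splitLevel x y ≤ t ↔ x / 2 ^ t = y / 2 ^ t := by
  constructor
  · intro h
    have hne : {t | x / 2 ^ t = y / 2 ^ t}.Nonempty := by
      refine ⟨x + y, ?_⟩
      have h1 : x < 2 ^ (x + y) := lt_of_lt_of_le Nat.lt_two_pow_self
        (Nat.pow_le_pow_right (by norm_num) (by omega))
      have h2 : y < 2 ^ (x + y) := lt_of_lt_of_le Nat.lt_two_pow_self
        (Nat.pow_le_pow_right (by norm_num) (by omega))
      simp [Nat.div_eq_of_lt h1, Nat.div_eq_of_lt h2]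
    have h0 : x / 2 ^ splitLevel x y = y / 2 ^ splitLevel x y := Nat.sInf_mem hne
    obtain ⟨j, rfl⟩ := Nat.exists_eq_add_of_le h
    rw [pow_add, ← Nat.div_div_eq_div_mul, ← Nat.div_div_eq_div_mul, h0]
  · exact fun h => Nat.sInf_le h

lemma splitLevel_pos {x y : ℕ} (h : x < y) : 0 < splitLevel x y := by
  by_contra h0
  have := splitLevel_le_iff.1 (Nat.le_of_not_lt h0)
  simp at this
  omega

lemma splitLevel_le {x y M : ℕ} (hx : x < 2 ^ M) (hy : y < 2 ^ M) : splitLevel x y ≤ M :=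
  splitLevel_le_iff.2 (by simp [Nat.div_eq_of_lt hx, Nat.div_eq_of_lt hy])

lemma splitLevel_max {x y z : ℕ} (h1 : x < y) (h2 : y < z) :
    splitLevel x z = max (splitLevel x y) (splitLevel y z) := by
  apply eq_of_forall_ge_iff
  intro t
  rw [max_le_iff, splitLevel_le_iff, splitLevel_le_iff, splitLevel_le_iff]
  have a : x / 2 ^ t ≤ y / 2 ^ t := Nat.div_le_div_right h1.le
  have b : y / 2 ^ t ≤ z / 2 ^ t := Nat.div_le_div_right h2.le
  omega

/-- Three distinct numbers cannot agree above a position and pairwise differ at it. -/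
lemma splitLevel_ne {x y z : ℕ} (h1 : x < y) (h2 : y < z) :
    splitLevel x y ≠ splitLevel y z := by
  intro h
  obtain ⟨t, ht⟩ : ∃ t, splitLevel x y = t + 1 :=
    ⟨splitLevel x y - 1, by have := splitLevel_pos h1; omega⟩
  have e1 := splitLevel_le_iff.1 ht.le
  have e2 := splitLevel_le_iff.1 (h ▸ ht).le
  have n1 : ¬ (x / 2 ^ t = y / 2 ^ t) := fun e => by
    have := splitLevel_le_iff.2 e; omega
  have n2 : ¬ (y / 2 ^ t = z / 2 ^ t) := fun e => by
    have := splitLevel_le_iff.2 e; omega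
  have a : x / 2 ^ t ≤ y / 2 ^ t := Nat.div_le_div_right h1.le
  have b : y / 2 ^ t ≤ z / 2 ^ t := Nat.div_le_div_right h2.le
  rw [pow_succ, ← Nat.div_div_eq_div_mul, ← Nat.div_div_eq_div_mul] at e1 e2
  omega

/-- The sequence of split levels of consecutive terms. -/
def delta (x : ℕ → ℕ) (i : ℕ) : ℕ := splitLevel (x i) (x (i + 1))

/-- Positions `i` (within the first `k` terms of `δ`) at which the direction of `δ`
differs from its initial direction. -/
def turns (k : ℕ) (δ : ℕ → ℕ) : Set ℕ :=
  {i | i + 1 < k ∧ ¬ (δ i < δ (i + 1) ↔ δ 0 < δ 1)}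

/-- The colour of a non-monotone `δ`, in terms of the initial direction and the parity of
the first turn `r`.  Two pairs get different colours if they have the same direction and
consecutive `r`, or if the directions differ and one of the `r` is `1`: these are the ways in which
the data can change when the first point is deleted. -/
def turnColour (up : Prop) (r : ℕ) : ℕ :=
  if r % 2 = 0 then 2 else if up then 0 else 1

/-- The stepping-up colouring of `(k+1)`-subsets built from a colouring `Γ` of `k`-subsets. -/
def stepUp (k : ℕ) (Γ : (ℕ → ℕ) → ℕ) (x : ℕ → ℕ) : ℕ :=
  if (turns k (delta x)).Nonempty then
    turnColour (delta x 0 < delta x 1) (sInf (turns k (delta x)))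
  else if delta x 0 < delta x 1 then 3 + Γ (fun i => delta x i - 1)
  else 3 + Γ (fun i => delta x (k - 1 - i) - 1)

lemma turnColour_lt (up : Prop) (r : ℕ) : turnColour up r < 3 := by
  unfold turnColour; split_ifs <;> omega

lemma turns_congr {k : ℕ} (hk : 2 ≤ k) {δ δ' : ℕ → ℕ} (h : ∀ i < k, δ i = δ' i) :
    turns k δ = turns k δ' := by
  ext i
  simp only [turns, Set.mem_ofPred_eq]
  refine and_congr_right fun hi => ?_
  rw [h i (by omega), h (i + 1) hi, h 0 (by omega), h 1 (by omega)]

lemma stepUp_congr {k : ℕ} (hk : 2 ≤ k) {Γ : (ℕ → ℕ) → ℕ}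
    (hΓ : ∀ x x', (∀ i < k, x i = x' i) → Γ x = Γ x') {x x' : ℕ → ℕ}
    (h : ∀ i < k + 1, x i = x' i) : stepUp k Γ x = stepUp k Γ x' := by
  have hd : ∀ i < k, delta x i = delta x' i := fun i hi => by
    rw [delta, delta, h i (by omega), h (i + 1) (by omega)]
  unfold stepUp
  rw [turns_congr hk hd, hd 0 (by omega), hd 1 (by omega),
    hΓ (fun i => delta x i - 1) (fun i => delta x' i - 1) (fun i hi => by rw [hd i hi]),
    hΓ (fun i => delta x (k - 1 - i) - 1) (fun i => delta x' (k - 1 - i) - 1)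
      (fun i hi => by rw [hd _ (by omega)])]

/-- A monotone sequence has no turns; `p` is its direction. -/
lemma turns_eq_empty_of_forall {k : ℕ} {δ : ℕ → ℕ} {p : Prop} (hk : 2 ≤ k)
    (h : ∀ i, i + 1 < k → (δ i < δ (i + 1) ↔ p)) : ¬ (turns k δ).Nonempty := by
  rintro ⟨i, hi, hn⟩
  have := h 0 (by omega)
  have := h i hi
  simp only [zero_add] at *
  tauto

lemma sInf_turns {k : ℕ} {δ : ℕ → ℕ} {r : ℕ} (hr : r ∈ turns k δ)
    (h : ∀ i < r, (δ i < δ (i + 1) ↔ δ 0 < δ 1)) : sInf (turns k δ) = r := by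
  apply le_antisymm (Nat.sInf_le hr)
  apply le_csInf ⟨r, hr⟩
  intro b hb
  by_contra hlt
  exact hb.2 (h b (by omega))

/-- If the whole sequence of split levels is increasing, deleting a point deletes exactly
one level, and all levels can be deleted in this way. -/
lemma delta_del_inc {k : ℕ} {x : ℕ → ℕ} (hx : ∀ i j, i < j → j ≤ k + 1 → x i < x j)
    (hinc : ∀ i < k, delta x i < delta x (i + 1)) {j i : ℕ} (hj : j ≤ k) (hi : i < k) :
    delta (x ∘ del (j + 1)) i = delta x (del j i) := by
  simp only [delta, del, Function.comp]
  rcases lt_trichotomy i j with h | h | h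
  · rw [if_pos (by omega), if_pos (by omega), if_pos h]
  · subst h
    rw [if_pos (by omega), if_neg (by omega), if_neg (by omega),
      splitLevel_max (hx i (i + 1) (by omega) (by omega)) (hx (i + 1) (i + 2) (by omega) (by omega))]
    exact max_eq_right (hinc i hi).le
  · rw [if_neg (by omega), if_neg (by omega), if_neg (by omega)]

/-- The counterpart of `delta_del_inc` for decreasing levels; here merging the levels next to the
deleted point keeps the left one. -/
lemma delta_del_dec {k : ℕ} {x : ℕ → ℕ} (hx : ∀ i j, i < j → j ≤ k + 1 → x i < x j)
    (hdec : ∀ i < k, delta x (i + 1) < delta x i) {j i : ℕ} (hi : i < k) :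
    delta (x ∘ del j) i = delta x (del j i) := by
  simp only [delta, del, Function.comp]
  rcases lt_trichotomy (i + 1) j with h | h | h
  · rw [if_pos (by omega), if_pos (by omega)]
  · rw [if_pos (by omega), if_neg (by omega), 
      splitLevel_max (hx i (i + 1) (by omega) (by omega)) (hx (i + 1) (i + 2) (by omega) (by omega))]
    exact max_eq_left (hdec i hi).le
  · rw [if_neg (by omega), if_neg (by omega)]

lemma strictMono_of_succ {k : ℕ} {δ : ℕ → ℕ} (h : ∀ i < k, δ i < δ (i + 1)) :
    ∀ i j, i < j → j ≤ k → δ i < δ j := by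
  intro i j hij
  induction j, hij using Nat.le_induction with
  | base => exact fun hk => h i hk
  | succ j hj ih => exact fun hk => (ih (by omega)).trans (h j hk)

lemma del_lt_del {a i j : ℕ} (h : i < j) : del a i < del a j := by
  unfold del; split_ifs <;> omega

lemma del_le {a i : ℕ} : i ≤ del a i ∧ del a i ≤ i + 1 := by
  unfold del; split_ifs <;> omega

/-- One stepping-up: passing from `k`-subsets to `(k+1)`-subsets exponentiates the number of
points at the cost of three colours. -/
lemma HasColouring.step {k M c : ℕ} (hk : 3 ≤ k) (h : HasColouring k M c) :
    HasColouring (k + 1) (2 ^ M) (c + 3) := by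
  obtain ⟨Γ, hΓc, hΓ, hΓh⟩ := h
  refine ⟨stepUp k Γ, fun x => ?_, fun x x' => stepUp_congr (by omega) hΓ, fun x hx hM => ?_⟩
  · unfold stepUp
    split_ifs
    · have := turnColour_lt (delta x 0 < delta x 1) (sInf (turns k (delta x))); omega
    · have := hΓc (fun i => delta x i - 1); omega
    · have := hΓc (fun i => delta x (k - 1 - i) - 1); omega
  by_contra! hhom
  have hpos : ∀ i ≤ k, 0 < delta x i := fun i hi =>
    splitLevel_pos (hx i (i + 1) (by omega) (by omega))
  have hle : ∀ i ≤ k, delta x i ≤ M := fun i hi =>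
    splitLevel_le (hM i (by omega)) (hM (i + 1) (by omega))
  have hne : ∀ i < k, delta x i ≠ delta x (i + 1) := fun i hi =>
    splitLevel_ne (hx i (i + 1) (by omega) (by omega)) (hx (i + 1) (i + 2) (by omega) (by omega))
  by_cases hmono : ∀ i < k, (delta x i < delta x (i + 1) ↔ delta x 0 < delta x 1)
  · by_cases h0 : delta x 0 < delta x 1
    · have hinc : ∀ i < k, delta x i < delta x (i + 1) := fun i hi => (hmono i hi).2 h0
      have hinc' := strictMono_of_succ hinc
      have key : ∀ j ≤ k, stepUp k Γ (x ∘ del (j + 1))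
          = 3 + Γ ((fun i => delta x i - 1) ∘ del j) := by
        intro j hj
        have hd : ∀ i < k, delta (x ∘ del (j + 1)) i = delta x (del j i) :=
          fun i hi => delta_del_inc hx hinc hj hi
        have hup : ∀ i, i + 1 < k →
            delta (x ∘ del (j + 1)) i < delta (x ∘ del (j + 1)) (i + 1) := by
          intro i hi
          rw [hd i (by omega), hd (i + 1) hi]
          have := @del_le j (i + 1)
          exact hinc' _ _ (del_lt_del (by omega)) (by omega)
        rw [stepUp, if_neg (turns_eq_empty_of_forall (p := True) (by omega)
          (fun i hi => by simpa using hup i hi)), if_pos (hup 0 (by omega))]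
        congr 1
        exact hΓ _ _ fun i hi => by simp only [Function.comp, hd i hi]
      obtain ⟨i, hi, j, hj, hij⟩ := hΓh (fun i => delta x i - 1)
        (fun i j hij hj => by
          have := hinc' i j hij hj
          have := hpos i (by omega)
          omega)
        (fun i hi => by
          have := hle i hi
          have := hpos i hi
          omega)
      have := hhom (i + 1) (by omega) (j + 1) (by omega)
      rw [key i hi, key j hj] at this
      omega
    · have hdec : ∀ i < k, delta x (i + 1) < delta x i := fun i hi => by
        have := hne i hi
        have := hmono i hi
        omega
      have hrev := strictMono_of_succ (k := k) (δ := fun i => delta x (k - i)) (fun i hi => by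
        have := hdec (k - (i + 1)) (by omega)
        rwa [show k - (i + 1) + 1 = k - i by omega] at this)
      have key : ∀ j ≤ k, stepUp k Γ (x ∘ del (k - j))
          = 3 + Γ ((fun i => delta x (k - i) - 1) ∘ del j) := by
        intro j hj
        have hd : ∀ i < k, delta (x ∘ del (k - j)) i = delta x (del (k - j) i) :=
          fun i hi => delta_del_dec hx hdec hi
        have hdn : ∀ i, i + 1 < k →
            ¬ delta (x ∘ del (k - j)) i < delta (x ∘ del (k - j)) (i + 1) := by
          intro i hi
          rw [hd i (by omega), hd (i + 1) hi]
          have h1 := @del_le (k - j) (i + 1)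
          have h2 := @del_lt_del (k - j) i (i + 1) (by omega)
          have := hrev (k - del (k - j) (i + 1)) (k - del (k - j) i) (by omega) (by omega)
          rw [show k - (k - del (k - j) (i + 1)) = del (k - j) (i + 1) by omega,
            show k - (k - del (k - j) i) = del (k - j) i by omega] at this
          omega
        rw [stepUp, if_neg (turns_eq_empty_of_forall (p := False) (by omega)
          (fun i hi => by simpa using hdn i hi)), if_neg (hdn 0 (by omega))]
        congr 1
        refine hΓ _ _ fun i hi => ?_
        simp only [Function.comp, hd (k - 1 - i) (by omega)]
        -- deleting position `k - j` and reversing is reversing and deleting position `j`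
        rw [show del (k - j) (k - 1 - i) = k - del j i by unfold del; split_ifs <;> omega]
      obtain ⟨i, hi, j, hj, hij⟩ := hΓh (fun i => delta x (k - i) - 1)
        (fun i j hij hj => by
          have := hrev i j hij hj
          have := hpos (k - i) (by omega)
          omega)
        (fun i hi => by
          have := hle (k - i) (by omega)
          have := hpos (k - i) (by omega)
          omega)
      have := hhom (k - i) (by omega) (k - j) (by omega)
      rw [key i hi, key j hj] at this
      omega
  · -- compare the set without its last point to the set without its first point
    have hex : ∃ r, r < k ∧ ¬ (delta x r < delta x (r + 1) ↔ delta x 0 < delta x 1) := by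
      by_contra! hc
      exact hmono fun i hi => hc i hi
    obtain ⟨hrk, hrt⟩ := Nat.find_spec hex
    have hmin : ∀ i < Nat.find hex, (delta x i < delta x (i + 1) ↔ delta x 0 < delta x 1) := by
      intro i hi
      by_contra hc
      exact Nat.find_min hex hi ⟨by omega, hc⟩
    set r := Nat.find hex
    have hr1 : 1 ≤ r := by
      by_contra hc
      have : r = 0 := by omega
      rw [this] at hrt
      exact hrt Iff.rfl
    have heq := hhom (k + 1) le_rfl 0 (by omega)
    have hpre : stepUp k Γ (x ∘ del (k + 1)) = stepUp k Γ x :=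
      stepUp_congr (by omega) hΓ fun i hi => by simp [del, hi]
    have hsuf : ∀ i, delta (x ∘ del 0) i = delta x (i + 1) := fun i => by simp [delta, del]
    rw [hpre] at heq
    have hsuf2 : 2 ≤ r → stepUp k Γ (x ∘ del 0) = turnColour (delta x 0 < delta x 1) (r - 1) := by
      intro hr2
      have h01 : (delta (x ∘ del 0) 0 < delta (x ∘ del 0) 1) = (delta x 0 < delta x 1) := by
        rw [hsuf, hsuf]; exact propext (hmin 1 (by omega))
      have hmem : r - 1 ∈ turns k (delta (x ∘ del 0)) := by
        refine ⟨by omega, ?_⟩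
        rw [h01, hsuf, hsuf, show r - 1 + 1 = r by omega]
        exact hrt
      rw [stepUp, if_pos ⟨_, hmem⟩, sInf_turns hmem, h01]
      intro i hi
      rw [h01, hsuf, hsuf]
      exact hmin (i + 1) (by omega)
    by_cases hrk' : r + 1 < k
    · have hmem : r ∈ turns k (delta x) := ⟨hrk', hrt⟩
      rw [stepUp, if_pos ⟨_, hmem⟩, sInf_turns hmem hmin] at heq
      by_cases hr2 : 2 ≤ r
      · rw [hsuf2 hr2] at heq
        unfold turnColour at heq
        split_ifs at heq <;> omega
      · have hr : r = 1 := by omega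
        rw [hr] at heq hrt
        rw [stepUp, hsuf, hsuf] at heq
        unfold turnColour at heq
        split_ifs at heq <;> first | omega | tauto
    · rw [hsuf2 (by omega), stepUp, if_neg] at heq
      · have := turnColour_lt (delta x 0 < delta x 1) (r - 1)
        split_ifs at heq <;> omega
      · exact turns_eq_empty_of_forall (by omega) fun i hi => hmin i (by omega)

/-! ### The Paris–Harrington theorem -/

/-- The Paris–Harrington theorem, so that `sigmaPH` is an attained minimum rather than `sInf ∅`.
If `F N` were a counterexample for each `N`, a nonprincipal ultrafilter yields a limit colouring
and, for subsets with fewer than `n` points, the limit colour of extending them by generic points.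
A finite set all of whose subsets have the generic colour can always be prolonged, and once it is
large it is homogeneous for some `F N`. -/
lemma exists_PH (k n : ℕ) : ∃ N, PH k (n + 1) n N := by
  by_contra! h
  simp only [PH, not_forall] at h
  choose F hF using h
  let U : Ultrafilter ℕ := Filter.hyperfilter ℕ
  have lim : ∀ g : ℕ → Fin k, ∃ c, ∀ᶠ x in U, g x = c := fun g =>
    U.eventually_exists_iff.1 (Filter.Eventually.of_forall fun x => ⟨g x, rfl⟩)
  choose L hL using lim
  have hgt : ∀ b : ℕ, ∀ᶠ x in U, b < x := fun b =>
    Nat.hyperfilter_le_atTop (Filter.eventually_gt_atTop b)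
  -- `col j s` is the `U`-limit colour of `s` together with `j` generic further points
  let col : ℕ → Finset ℕ → Fin k := fun j => Nat.rec (fun s => L fun N => F N s)
    (fun _ prev s => L fun x => prev (insert x s)) j
  let Good : Finset ℕ → Prop := fun A => ∀ s ⊆ A, ∀ j, s.card + j = n → col j s = col n ∅
  have good_empty : Good ∅ := by
    intro s hs j hj
    obtain rfl := Finset.subset_empty.1 hs
    simp at hj
    rw [hj]
  have extend : ∀ A, Good A → ∃ x, (∀ y ∈ A, y < x) ∧ Good (insert x A) := by
    intro A hA
    have h1 : ∀ᶠ x in U, ∀ s ∈ A.powerset,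
        col (n - s.card - 1) (insert x s) = col (n - s.card - 1 + 1) s :=
      (Filter.eventually_all_finset _).2 fun s _ =>
        hL fun x => col (n - s.card - 1) (insert x s)
    obtain ⟨x, hx1, hx2⟩ := (h1.and (hgt (A.sup id))).exists
    have hlt : ∀ y ∈ A, y < x := fun y hy =>
      lt_of_le_of_lt (Finset.le_sup (f := id) hy) hx2
    refine ⟨x, hlt, fun s hs j hj => ?_⟩
    by_cases hxs : x ∈ s
    · have hsub : s.erase x ⊆ A := fun y hy => by
        have := hs (Finset.mem_of_mem_erase hy)
        rcases Finset.mem_insert.1 this with h | h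
        · exact absurd h (Finset.ne_of_mem_erase hy)
        · exact h
      have hc := Finset.card_erase_add_one hxs
      have := hx1 _ (Finset.mem_powerset.2 hsub)
      rw [Finset.insert_erase hxs, show n - (s.erase x).card - 1 = j by omega] at this
      rw [this]
      exact hA _ hsub (j + 1) (by omega)
    · exact hA s ((Finset.subset_insert_iff_of_notMem hxs).1 hs) j hj
  obtain ⟨a, -, ha⟩ := extend ∅ good_empty
  have build : ∀ m : ℕ, ∃ A, Good A ∧ A.card = m + 1 ∧ a ∈ A := by
    intro m
    induction m with
    | zero => exact ⟨_, ha, by simp, by simp⟩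
    | succ m ih =>
      obtain ⟨A, hA, hc, haA⟩ := ih
      obtain ⟨x, hx, hxA⟩ := extend A hA
      refine ⟨_, hxA, ?_, Finset.mem_insert_of_mem haA⟩
      rw [Finset.card_insert_of_notMem fun h => lt_irrefl _ (hx x h), hc]
  obtain ⟨A, hA, hc, haA⟩ := build (n + a)
  have h1 : ∀ᶠ N in U, ∀ s ∈ A.powerset, F N s = col 0 s :=
    (Filter.eventually_all_finset _).2 fun s _ => hL fun N => F N s
  obtain ⟨N, hN1, hN2⟩ := (h1.and (hgt (A.sup id))).exists
  apply hF N
  refine ⟨A, fun y hy => Finset.mem_range.2 (lt_of_le_of_lt (Finset.le_sup (f := id) hy) hN2),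
    by omega, ⟨⟨a, haA⟩, ?_⟩, fun s t hs ht hsn htn => ?_⟩
  · have := Finset.min'_le A a haA
    omega
  · rw [hN1 s (Finset.mem_powerset.2 hs), hN1 t (Finset.mem_powerset.2 ht),
      hA s hs 0 (by omega), hA t ht 0 (by omega)]

/-! ### Trading colours for dimension -/

/-- The number of the first `e` terms of `x` that are below `M`. -/
def countBelow (e M : ℕ) (x : ℕ → ℕ) : ℕ := ((Finset.range e).filter fun i => x i < M).card

lemma countBelow_eq {e M j : ℕ} {x : ℕ → ℕ} (hj : j ≤ e) (h1 : ∀ i < j, x i < M)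
    (h2 : ∀ i, j ≤ i → i < e → M ≤ x i) : countBelow e M x = j := by
  unfold countBelow
  rw [show ((Finset.range e).filter fun i => x i < M) = Finset.range j from ?_,
    Finset.card_range]
  ext i
  simp only [Finset.mem_filter, Finset.mem_range]
  constructor
  · rintro ⟨hi, hlt⟩
    by_contra hc
    have := h2 i (by omega) hi
    omega
  · exact fun hi => ⟨by omega, h1 i hi⟩

lemma countBelow_congr {e M : ℕ} {x x' : ℕ → ℕ} (h : ∀ i < e, x i = x' i) :
    countBelow e M x = countBelow e M x' := by
  unfold countBelow
  congr 1
  apply Finset.filter_congr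
  intro i hi
  rw [h i (Finset.mem_range.1 hi)]

/-- The colour under `f` of the set of the first `d` terms of `x`, translated down by `d`. -/
def shiftedColour {K : ℕ} (f : Finset ℕ → Fin K) (d : ℕ) (x : ℕ → ℕ) : ℕ :=
  f ((Finset.range d).image fun i => x i - d)

lemma shiftedColour_congr {K : ℕ} (f : Finset ℕ → Fin K) {d : ℕ} {x x' : ℕ → ℕ}
    (h : ∀ i < d, x i = x' i) : shiftedColour f d x = shiftedColour f d x' := by
  unfold shiftedColour
  congr 2
  apply Finset.image_congr
  intro i hi
  simp only [h i (by simpa using hi)]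

/-- The comparison (`<`, `=` or `>`) of the colours of the first `d` and of the last `d`
among the first `d+1` terms of `x`. -/
def compareColour {K : ℕ} (f : Finset ℕ → Fin K) (d : ℕ) (x : ℕ → ℕ) : ℕ :=
  if shiftedColour f d x < shiftedColour f d (fun i => x (i + 1)) then 0
  else if shiftedColour f d x = shiftedColour f d (fun i => x (i + 1)) then 1 else 2

lemma compareColour_lt {K : ℕ} (f : Finset ℕ → Fin K) (d : ℕ) (x : ℕ → ℕ) :
    compareColour f d x < 3 := by
  unfold compareColour; split_ifs <;> omega

/-- The colouring of `(d+1)`-subsets with eight colours: comparison of `f`-colours above `M`,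
the colouring `Γ` below `M`, and for sets meeting both sides a colour depending on the number
of elements below `M`.  The latter is such that consecutive counts get different colours. -/
def combined {K : ℕ} (f : Finset ℕ → Fin K) (Γ : (ℕ → ℕ) → ℕ) (d M : ℕ) (x : ℕ → ℕ) : ℕ :=
  if countBelow (d + 1) M x = 0 then compareColour f d x
  else if countBelow (d + 1) M x = d + 1 then Γ x
  else if countBelow (d + 1) M x = d then 7
  else 4 + countBelow (d + 1) M x % 2

lemma combined_congr {K : ℕ} (f : Finset ℕ → Fin K) {Γ : (ℕ → ℕ) → ℕ} {d M : ℕ}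
    (hΓ : ∀ x x', (∀ i < d + 1, x i = x' i) → Γ x = Γ x') {x x' : ℕ → ℕ}
    (h : ∀ i < d + 1, x i = x' i) : combined f Γ d M x = combined f Γ d M x' := by
  unfold combined compareColour
  rw [countBelow_congr h, hΓ x x' h, shiftedColour_congr f (fun i hi => h i (by omega)),
    shiftedColour_congr f (x := fun i => x (i + 1)) (x' := fun i => x' (i + 1))
      (fun i hi => h (i + 1) (by omega))]

/-- If `7` colours suffice to avoid homogeneous `(d+2)`-sets of `(d+1)`-subsets of a sufficiently
long initial segment, then homogeneous sets for the combined colouring lie above `M`, hence have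
more than `K + d` elements, so that `f` can neither increase nor decrease along windows.
Dropping the `d` largest elements makes `f` constant, and translating the set down by `d`
restores largeness. -/
lemma PH_of_hasColouring {d K M N : ℕ} (hd : 2 ≤ d) (hM : K + 2 * d + 2 ≤ M)
    (hC : HasColouring (d + 1) M 7) (h : PH 8 (d + 2) (d + 1) N) : PH K (d + 1) d N := by
  intro f
  obtain ⟨Γ, hΓc, hΓ, hΓh⟩ := hC
  have hlt8 : ∀ x, combined f Γ d M x < 8 := fun x => by
    have := compareColour_lt f d x
    have := hΓc x
    unfold combined
    split_ifs <;> omega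
  obtain ⟨Y, hYN, hYc, ⟨hYne, hYl⟩, hY⟩ := h fun s => ⟨combined f Γ d M (ascEnum s), hlt8 _⟩
  have hom : ∀ z w : ℕ → ℕ, (∀ i j, i < j → j < d + 1 → z i < z j) →
      (∀ i < d + 1, z i ∈ Y) → (∀ i j, i < j → j < d + 1 → w i < w j) →
      (∀ i < d + 1, w i ∈ Y) → combined f Γ d M z = combined f Γ d M w := by
    intro z w hz hzY hw hwY
    have := hY ((Finset.range (d + 1)).image z) ((Finset.range (d + 1)).image w)
      (Finset.image_subset_iff.2 fun i hi => hzY i (Finset.mem_range.1 hi))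
      (Finset.image_subset_iff.2 fun i hi => hwY i (Finset.mem_range.1 hi))
      (card_image_range hz) (card_image_range hw)
    rw [Fin.mk.injEq] at this
    rw [combined_congr f hΓ fun i hi => (ascEnum_image hz hi).symm, this]
    exact combined_congr f hΓ fun i hi => ascEnum_image hw hi
  set y := ascEnum Y with hy
  set l := Y.card with hl
  have ylt : ∀ i j, i < j → j < l → y i < y j := fun i j hij hj => ascEnum_lt hij hj
  have ymem : ∀ i < l, y i ∈ Y := fun i hi => ascEnum_mem hi
  have yle : ∀ i < l, y 0 ≤ y i := fun i hi => by
    rcases Nat.eq_zero_or_pos i with rfl | h0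
    · exact le_rfl
    · exact (ylt 0 i h0 hi).le
  have hl0 : y 0 ≤ l := by
    obtain ⟨i, hi, he⟩ := exists_ascEnum (Y.min'_mem hYne)
    have := yle i hi
    rw [hy] at this ⊢
    omega
  by_cases hlow : y 0 < M
  · exfalso
    by_cases hall : y (d + 1) < M
    · -- the first `d+2` elements of `Y` lie below `M`
      have hb : ∀ i ≤ d + 1, y i < M := fun i hi => by
        rcases Nat.lt_or_ge i (d + 1) with h1 | h1
        · exact (ylt i (d + 1) h1 (by omega)).trans hall
        · rwa [show i = d + 1 by omega]
      have key : ∀ j ≤ d + 1, combined f Γ d M (y ∘ del j) = Γ (y ∘ del j) := fun j hj => by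
        have : countBelow (d + 1) M (y ∘ del j) = d + 1 := countBelow_eq le_rfl
          (fun i hi => hb _ (by have := @del_le j i; omega)) (fun i h1 h2 => by omega)
        rw [combined, this, if_neg (by omega), if_pos rfl]
      obtain ⟨i, hi, j, hj, hij⟩ := hΓh y (fun i j hij hj => ylt i j hij (by omega)) hb
      apply hij
      rw [← key i hi, ← key j hj]
      exact hom _ _
        (fun a b hab hb => ylt _ _ (del_lt_del hab) (by have := @del_le i b; omega))
        (fun a ha => ymem _ (by have := @del_le i a; omega))
        (fun a b hab hb => ylt _ _ (del_lt_del hab) (by have := @del_le j b; omega))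
        (fun a ha => ymem _ (by have := @del_le j a; omega))
    · -- the first `d+2` elements of `Y` lie on both sides of `M`
      have hex : ∃ j, M ≤ y j := ⟨d + 1, by omega⟩
      have hj1 := Nat.find_spec hex
      have hj2 : ∀ i < Nat.find hex, y i < M := fun i hi => by
        have := Nat.find_min hex hi; omega
      have hj3 : Nat.find hex ≤ d + 1 := Nat.find_min' hex (by omega)
      set j := Nat.find hex
      have hj0 : j ≠ 0 := fun h0 => by rw [h0] at hj1; omega
      have hge : ∀ i, j ≤ i → i < l → M ≤ y i := fun i hji hi => by
        rcases Nat.eq_or_lt_of_le hji with h1 | h1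
        · rwa [← h1]
        · have := ylt j i h1 hi; omega
      have c1 : countBelow (d + 1) M y = j :=
        countBelow_eq hj3 hj2 fun i h1 h2 => hge i h1 (by omega)
      have c2 : countBelow (d + 1) M (fun i => y (i + 1)) = j - 1 :=
        countBelow_eq (by omega) (fun i hi => hj2 _ (by omega))
          fun i h1 h2 => hge _ (by omega) (by omega)
      have := hom y (fun i => y (i + 1)) (fun a b hab hb => ylt _ _ hab (by omega))
        (fun a ha => ymem _ (by omega)) (fun a b hab hb => ylt _ _ (by omega) (by omega))
        (fun a ha => ymem _ (by omega))
      have e1 := hΓc y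
      have e2 := compareColour_lt f d fun i => y (i + 1)
      rw [combined, combined, c1, c2] at this
      split_ifs at this <;> omega
  · have hwin : ∀ z : ℕ → ℕ, (∀ i j, i < j → j < d + 1 → z i < z j) →
        (∀ i < d + 1, z i ∈ Y) → compareColour f d z = compareColour f d y := by
      have aux : ∀ z : ℕ → ℕ, (∀ i < d + 1, z i ∈ Y) →
          combined f Γ d M z = compareColour f d z := fun z hz => by
        have : countBelow (d + 1) M z = 0 := countBelow_eq (by omega) (fun i hi => by omega)
          fun i _ hi => by
            obtain ⟨t, ht, he⟩ := exists_ascEnum (hz i hi)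
            have := yle t ht
            rw [hy] at this hlow
            omega
        rw [combined, if_pos this]
      intro z hz hzY
      have hyY : ∀ i < d + 1, y i ∈ Y := fun i hi => ymem i (by omega)
      rw [← aux z hzY, ← aux y hyY]
      exact hom z y hz hzY (fun i j hij hj => ylt i j hij (by omega)) hyY
    have hv : ∀ i, i + d < l → compareColour f d (fun t => y (i + t)) = compareColour f d y :=
      fun i hi => hwin _ (fun a b hab hb => ylt _ _ (by omega) (by omega))
        (fun a ha => ymem _ (by omega))
    have hshift : ∀ i, (fun t => y (i + (t + 1))) = fun t => y (i + 1 + t) := fun i => by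
      funext t; congr 1; omega
    have hvK : ∀ x, shiftedColour f d x < K := fun x => Fin.is_lt _
    have h3 := compareColour_lt f d y
    obtain h0 | h1 | h2 : compareColour f d y = 0 ∨ compareColour f d y = 1 ∨
        compareColour f d y = 2 := by omega
    · -- the colours of consecutive windows would form a chain of more than `K` colours
      exfalso
      have : ∀ i ≤ K, i ≤ shiftedColour f d (fun t => y (i + t)) := by
        intro i
        induction i with
        | zero => simp
        | succ i ih =>
          intro hi
          have a := ih (by omega)
          have b := hv i (by omega)
          rw [h0, compareColour, hshift] at b
          split_ifs at b <;> omega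
      have a := this K le_rfl
      have b := hvK fun t => y (K + t)
      omega
    · have heq : ∀ z : ℕ → ℕ, (∀ i j, i < j → j < d + 1 → z i < z j) →
          (∀ i < d + 1, z i ∈ Y) →
          shiftedColour f d z = shiftedColour f d (fun i => z (i + 1)) := by
        intro z hz hzY
        have := hwin z hz hzY
        rw [h1, compareColour] at this
        split_ifs at this <;> first | assumption | omega
      have hyd : ∀ i < l, d ≤ y i := fun i hi => by have := yle i hi; omega
      have hcard : ((Finset.range (l - d)).image fun i => y i - d).card = l - d :=
        card_image_range fun i j hij hj => by
          have := ylt i j hij (by omega)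
          have := hyd i (by omega)
          omega
      have hmem0 : y 0 - d ∈ (Finset.range (l - d)).image fun i => y i - d :=
        Finset.mem_image.2 ⟨0, Finset.mem_range.2 (by omega), rfl⟩
      refine ⟨(Finset.range (l - d)).image fun i => y i - d, ?_, by omega, ⟨⟨_, hmem0⟩, ?_⟩, ?_⟩
      · refine Finset.image_subset_iff.2 fun i hi => ?_
        have := Finset.mem_range.1 (hYN (ymem i (by have := Finset.mem_range.1 hi; omega)))
        exact Finset.mem_range.2 (by omega)
      · have := Finset.min'_le _ _ hmem0
        omega
      · -- every `d`-subset is connected by windows to the `d` largest elements of `Y`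
        have top : ∀ s ⊆ (Finset.range (l - d)).image (fun i => y i - d), s.card = d →
            (f s : ℕ) = shiftedColour f d fun i => y (l - d + i) := by
          intro s hs hsd
          have hex : ∀ i, ∃ a, i < d → a < l - d ∧ y a - d = ascEnum s i := by
            intro i
            by_cases hi : i < d
            · obtain ⟨a, ha, he⟩ := Finset.mem_image.1 (hs (ascEnum_mem (i := i) (by omega)))
              exact ⟨a, fun _ => ⟨Finset.mem_range.1 ha, he⟩⟩
            · exact ⟨0, fun h => absurd h hi⟩
          choose a ha using hex
          have hamono : ∀ i j, i < j → j < d → a i < a j := by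
            intro i j hij hj
            obtain ⟨h1, h2⟩ := ha i (by omega)
            obtain ⟨h3, h4⟩ := ha j hj
            have h5 : ascEnum s i < ascEnum s j := ascEnum_lt hij (by omega)
            by_contra hc
            rcases Nat.eq_or_lt_of_le (Nat.le_of_not_lt hc) with h6 | h6
            · rw [h6] at h4; omega
            · have := ylt _ _ h6 (by omega); omega
          let b : ℕ → ℕ := fun t => if t < d then a t else l - d + (t - d)
          have hbl : ∀ t < 2 * d, b t < l := by
            intro t ht
            simp only [b]
            split_ifs with h
            · have := (ha t h).1; omega
            · omega
          have hbmono : ∀ i j, i < j → j < 2 * d → b i < b j := by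
            intro i j hij hj
            simp only [b]
            split_ifs with h h' h'
            · exact hamono i j hij h'
            · have := (ha i h).1; omega
            · omega
            · omega
          have hchain : ∀ t ≤ d, shiftedColour f d (fun i => y (b (0 + i)))
              = shiftedColour f d (fun i => y (b (t + i))) := by
            intro t
            induction t with
            | zero => simp
            | succ t ih =>
              intro ht
              rw [ih (by omega), heq (fun i => y (b (t + i)))
                (fun i j hij hj => ylt _ _ (hbmono _ _ (by omega) (by omega))
                  (hbl _ (by omega)))
                (fun i hi => ymem _ (hbl _ (by omega)))]
              exact shiftedColour_congr f fun i hi => by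
                simp only [show t + (i + 1) = t + 1 + i by omega]
          have hstart : (f s : ℕ) = shiftedColour f d (fun i => y (b (0 + i))) := by
            unfold shiftedColour
            congr 2
            conv_lhs => rw [← image_ascEnum s, hsd]
            apply Finset.image_congr
            intro i hi
            have hi : i < d := by simpa using hi
            simp only [b, zero_add, if_pos hi, (ha i hi).2]
          rw [hstart, hchain d le_rfl]
          exact shiftedColour_congr f fun i hi => by simp [b]
        intro s t hs ht hsd htd
        exact Fin.ext ((top s hs hsd).trans (top t ht htd).symm)
    · exfalso
      have : ∀ i ≤ K, shiftedColour f d (fun t => y (i + t)) + i ≤ shiftedColour f d y := by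
        intro i
        induction i with
        | zero => simp
        | succ i ih =>
          intro hi
          have a := ih (by omega)
          have b := hv i (by omega)
          rw [h2, compareColour, hshift] at b
          split_ifs at b <;> omega
      have a := this K le_rfl
      have b := hvK y
      omega

lemma quadratic_le_two_pow {n : ℕ} (hn : 15 ≤ n) : 117 * n ^ 2 + 1 ≤ 2 ^ (n + 1) := by
  induction n, hn using Nat.le_induction with
  | base => norm_num
  | succ n hn ih => rw [pow_succ 2 (n + 1)]; nlinarith

/-- Two stepping-ups from the trivial colouring of `(n+1)`-subsets give a range large enough to
accommodate the number `10 ^ (35 n²)` of colours. -/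
lemma threshold_le {n : ℕ} (hn : 15 ≤ n) :
    10 ^ (35 * n ^ 2) + 2 * (n + 2) + 2 ≤ 2 ^ 2 ^ (n + 1) := by
  have h1 : 10 ^ (35 * n ^ 2) ≤ 2 ^ (117 * n ^ 2) := by
    rw [pow_mul, pow_mul]
    exact Nat.pow_le_pow_left (by norm_num) _
  have h2 : 117 * n ^ 2 < 2 ^ (117 * n ^ 2) := Nat.lt_two_pow_self
  have h3 : 2 * (n + 2) + 2 ≤ 117 * n ^ 2 := by nlinarith
  have h4 : 2 ^ (117 * n ^ 2 + 1) ≤ 2 ^ 2 ^ (n + 1) :=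
    Nat.pow_le_pow_right (by norm_num) (quadratic_le_two_pow hn)
  rw [pow_succ] at h4
  omega

/-- For every natural number `n ≥ 15`, `σ(n+2, 10^(35n²)) ≤ σ(n+3, 8)`. -/
theorem stmt1 : ∀ n : ℕ, 15 ≤ n → sigmaPH (n + 2) (10 ^ (35 * n ^ 2)) ≤ sigmaPH (n + 3) 8 := by
  intro n hn
  have hPH : PH 8 (n + 3 + 1) (n + 3) (sigmaPH (n + 3) 8) :=
    Nat.sInf_mem (s := {N | PH 8 (n + 3 + 1) (n + 3) N}) (exists_PH 8 (n + 3))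
  have hC : HasColouring (n + 3) (2 ^ 2 ^ (n + 1)) 7 :=
    ((hasColouring_self (n + 1)).step (by omega)).step (by omega)
  exact Nat.sInf_le (PH_of_hasColouring (by omega) (threshold_le hn) hC hPH)

end
end

section
/- For every natural number n and every ordinal α < ε₀, one has n ≤ n² < F^⋄_{ε₀+α}(n). -/
/-!
Every function of the slow hierarchy strictly dominates squaring. Two facts about fundamental
sequences carry the argument: for a limit `α < ε₀` the ordinal `{α}(n)` is below `α`, so that the
recursions defining `fgh` and `slowF` really descend, and `{α}(n) ≥ 2` as soon as `n ≥ 1`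
(`fundSeq_spec`).

By induction, `F_α(x) > x` for all `α < ε₀`, and `F_α(x) > x²` for `2 ≤ α < ε₀` and `x ≥ 1`: the
base case is `F_2(x) = 2^(x+1) (x+1) - 1`, successor steps only iterate an inflationary function,
and limit steps stay at indices `≥ 2`. Since `F^⋄_{ε₀}(x)` is `F_β(x)` for a tower `β ≥ ω`, it
exceeds `x²`, whatever the value of the inverse; the slow hierarchy above it inherits the bound
by the same kind of induction.
-/


open Ordinal
open scoped Classical

noncomputable section

/-- The least Cantor normal form exponent `c` of a nonzero ordinal, with the cofactor of `ω ^ c`. -/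
lemma exists_eq_opow_mul_succ (α : Ordinal.{0}) (h : α ≠ 0) :
    ∃ c β : Ordinal.{0}, α = omega0 ^ c * (β + 1) := by
  induction α using WellFoundedLT.induction with
  | ind α ih =>
    have hdm := Ordinal.div_add_mod α (omega0 ^ Ordinal.log omega0 α)
    have hlt : α / omega0 ^ Ordinal.log omega0 α < omega0 :=
      Ordinal.div_opow_log_lt α Ordinal.one_lt_omega0
    have hpos : 0 < α / omega0 ^ Ordinal.log omega0 α := Ordinal.div_opow_log_pos _ h
    have hr : α % omega0 ^ Ordinal.log omega0 α < α := Ordinal.mod_opow_log_lt_self _ h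
    by_cases hz : α % omega0 ^ Ordinal.log omega0 α = 0
    · obtain ⟨k, hk⟩ := Ordinal.lt_omega0.1 hlt
      rw [hz, add_zero, hk] at hdm
      rw [hk] at hpos
      obtain ⟨m, rfl⟩ : ∃ m, k = m + 1 := Nat.exists_eq_succ_of_ne_zero (by
        rintro rfl
        simp at hpos)
      exact ⟨_, m, by rw [← hdm]; push_cast; rfl⟩
    · obtain ⟨c, β, hcb⟩ := ih _ hr hz
      have hc : c ≤ Ordinal.log omega0 α := by
        have h1 : omega0 ^ c ≤ α % omega0 ^ Ordinal.log omega0 α := by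
          rw [hcb]
          exact Ordinal.le_mul_left _ (by simp)
        have h2 : α % omega0 ^ Ordinal.log omega0 α < omega0 ^ Ordinal.log omega0 α :=
          Ordinal.mod_lt _ (Ordinal.opow_ne_zero _ Ordinal.omega0_ne_zero)
        exact ((Ordinal.opow_lt_opow_iff_right Ordinal.one_lt_omega0).1 (h1.trans_lt h2)).le
      refine ⟨c, omega0 ^ (Ordinal.log omega0 α - c) *
        (α / omega0 ^ Ordinal.log omega0 α) + β, ?_⟩
      rw [add_assoc, mul_add, ← mul_assoc, ← Ordinal.opow_add, Ordinal.add_sub_cancel_of_le hc,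
        ← hcb, hdm]

lemma sSup_opow_dvd (c β : Ordinal.{0}) :
    sSup {d : Ordinal | omega0 ^ d ∣ omega0 ^ c * (β + 1)} = c := by
  apply IsGreatest.csSup_eq
  refine ⟨Dvd.intro _ rfl, fun d hd => ?_⟩
  by_contra! hcd
  have h1 : omega0 ^ (c + 1) ∣ omega0 ^ c * (β + 1) :=
    (Ordinal.opow_dvd_opow omega0 (Order.add_one_le_of_lt hcd)).trans hd
  obtain ⟨e, he⟩ := h1
  rw [Ordinal.opow_add, Ordinal.opow_one, mul_assoc] at he
  have he' : β + 1 = omega0 * e := by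
    have := congrArg (· / omega0 ^ c) he
    simpa [Ordinal.mul_div_cancel _ (Ordinal.opow_ne_zero c Ordinal.omega0_ne_zero)] using this
  -- a multiple of `ω` is not a successor: compare remainders modulo `ω`
  have hm : β < omega0 * e := by rw [← he']; exact Order.lt_add_one_iff.2 le_rfl
  obtain ⟨q, hq, n, hn, hlt⟩ : ∃ q, q < e ∧ ∃ n, n < omega0 ∧ β = omega0 * q + n :=
    ⟨β / omega0, (Ordinal.lt_mul_iff_div_lt Ordinal.omega0_ne_zero).1 hm, β % omega0,
      Ordinal.mod_lt _ Ordinal.omega0_ne_zero, (Ordinal.div_add_mod _ _).symm⟩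
  have h2 : omega0 * (q + 1) ≤ omega0 * e := by gcongr; exact Order.add_one_le_of_lt hq
  rw [← he', hlt, mul_add, mul_one, add_assoc] at h2
  have h3 : omega0 ≤ n + 1 := (add_le_add_iff_left _).1 h2
  exact absurd h3 (not_le.2 (Ordinal.isSuccLimit_omega0.add_one_lt hn))

lemma lt_opow_of_lt_eps0 {c : Ordinal.{0}} (h : c < eps0) : c < omega0 ^ c := by
  refine lt_of_le_of_ne (Ordinal.right_le_opow _ Ordinal.one_lt_omega0) fun he => ?_
  refine absurd h (not_lt.2 ?_)
  exact Ordinal.nfp_le_fp (fun a b hab => Ordinal.opow_le_opow_right Ordinal.omega0_pos hab)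
    (zero_le (a := c)) he.symm.le

lemma choose_succ {α β : Ordinal.{0}} (hs : ∃ γ, α = γ + 1) (h : α = β + 1) :
    Classical.choose hs = β := by
  have := (Classical.choose_spec hs).symm.trans h
  simpa using this

/-- The fundamental sequence of a limit below `ε₀` stays below the limit, and its members of
positive index are at least `2`. -/
lemma fundSeq_spec (α : Ordinal.{0}) (hα : α < eps0) (h0 : α ≠ 0) (hs : ¬ ∃ β, α = β + 1)
    (n : ℕ) : fundSeq α n < α ∧ (1 ≤ n → 2 ≤ fundSeq α n) := by
  induction α using WellFoundedLT.induction with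
  | ind α ih =>
    obtain ⟨c, β, hcb⟩ := exists_eq_opow_mul_succ α h0
    have hγ : sSup {d : Ordinal | omega0 ^ d ∣ α} = c := by rw [hcb]; exact sSup_opow_dvd c β
    have hq : Ordinal.pred (α / omega0 ^ c) = β := by
      rw [hcb, Ordinal.mul_div_cancel _ (Ordinal.opow_ne_zero c Ordinal.omega0_ne_zero)]
      simp
    have hc0 : c ≠ 0 := by
      rintro rfl
      exact hs ⟨β, by simpa using hcb⟩
    have hαe : α = omega0 ^ c * β + omega0 ^ c := by rw [hcb, mul_add, mul_one]
    have hle : omega0 ^ c ≤ α := by rw [hαe]; exact le_add_self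
    have hce : c < eps0 :=
      ((Ordinal.right_le_opow _ Ordinal.one_lt_omega0).trans hle).trans_lt hα
    have hcα : c < α := (lt_opow_of_lt_eps0 hce).trans_le hle
    rw [fundSeq, dif_neg h0, dif_neg hs]
    simp only [hγ, hq]
    split_ifs with hcs
    · have hd := Classical.choose_spec hcs
      set δ := Classical.choose hcs
      constructor
      · conv_rhs => rw [hαe]
        gcongr
        conv_rhs => rw [hd, Ordinal.opow_add, Ordinal.opow_one]
        have hn : ((n : Ordinal.{0}) + 1) < omega0 := by
          exact_mod_cast Ordinal.natCast_lt_omega0 (n + 1)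
        exact mul_lt_mul_of_pos_left hn (Ordinal.opow_pos _ Ordinal.omega0_pos)
      · intro hn
        have h1 : (2 : Ordinal.{0}) ≤ (n : Ordinal.{0}) + 1 := by
          exact_mod_cast (by omega : 2 ≤ n + 1)
        exact (h1.trans (Ordinal.le_mul_right _ (Ordinal.opow_pos _ Ordinal.omega0_pos))).trans
          le_add_self
    · obtain ⟨i1, i2⟩ := ih c hcα hce hc0 hcs
      constructor
      · conv_rhs => rw [hαe]
        gcongr
        exact (Ordinal.opow_lt_opow_iff_right Ordinal.one_lt_omega0).2 i1
      · intro hn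
        exact ((i2 hn).trans (Ordinal.right_le_opow _ Ordinal.one_lt_omega0)).trans le_add_self

lemma fgh_zero (x : ℕ) : fgh 0 x = x + 1 := by rw [fgh]; simp

lemma fgh_succ (β : Ordinal.{0}) (x : ℕ) : fgh (β + 1) x = (fgh β)^[x + 1] x := by
  have hs : ∃ γ, β + 1 = γ + 1 := ⟨β, rfl⟩
  rw [fgh, dif_neg (by simp), dif_pos hs]
  simp only [choose_succ hs rfl]

lemma fgh_limit {α : Ordinal.{0}} (hα : α < eps0) (h0 : α ≠ 0) (hs : ¬ ∃ β, α = β + 1)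
    (x : ℕ) : fgh α x = fgh (fundSeq α x) x := by
  rw [fgh, dif_neg h0, dif_neg hs]
  exact dif_pos (fundSeq_spec α hα h0 hs x).1

/-- One or more iterations of an inflationary function reach at least its value. -/
lemma le_iterate_succ {g : ℕ → ℕ} (hg : ∀ y, y ≤ g y) (k x : ℕ) : g x ≤ g^[k + 1] x := by
  rw [Function.iterate_succ_apply]
  exact Function.id_le_iterate_of_id_le hg k (g x)

lemma lt_fgh (α : Ordinal.{0}) (hα : α < eps0) (x : ℕ) : x < fgh α x := by
  induction α using WellFoundedLT.induction generalizing x with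
  | ind α ih =>
    by_cases h0 : α = 0
    · subst h0
      rw [fgh_zero]
      exact Nat.lt_succ_self x
    by_cases hs : ∃ β, α = β + 1
    · obtain ⟨β, rfl⟩ := hs
      have hβ : β < β + 1 := Order.lt_add_one_iff.2 le_rfl
      have hg := ih β hβ (hβ.trans hα)
      rw [fgh_succ]
      exact (hg x).trans_le (le_iterate_succ (fun y => (hg y).le) x x)
    · have hl := (fundSeq_spec α hα h0 hs x).1
      rw [fgh_limit hα h0 hs]
      exact ih _ hl (hl.trans hα) x

lemma sq_lt_fgh_two (x : ℕ) : x ^ 2 < fgh 2 x := by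
  have h1 : fgh 1 = fun x => 2 * x + 1 := by
    funext x
    have hf : fgh 0 = fun x => x + 1 := funext fgh_zero
    have := fgh_succ 0 x
    rw [zero_add, hf] at this
    rw [this]
    have hadd : ∀ k y : ℕ, (fun x => x + 1)^[k] y = y + k := fun k y =>
      Nat.succ_iterate y k
    rw [hadd]
    omega
  have hit : ∀ k y : ℕ, (fun x => 2 * x + 1)^[k] y + 1 = 2 ^ k * (y + 1) := by
    intro k
    induction k with
    | zero => simp
    | succ k ih =>
      intro y
      rw [Function.iterate_succ_apply, ih]
      ring
  have h2 : fgh 2 x + 1 = 2 ^ (x + 1) * (x + 1) := by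
    rw [← one_add_one_eq_two, fgh_succ, h1, hit]
  have h3 : x + 1 < 2 ^ (x + 1) := Nat.lt_two_pow_self
  nlinarith

lemma sq_lt_fgh (α : Ordinal.{0}) (hα : α < eps0) (h2 : 2 ≤ α) (x : ℕ) (hx : 1 ≤ x) :
    x ^ 2 < fgh α x := by
  induction α using WellFoundedLT.induction with
  | ind α ih =>
    have h0 : α ≠ 0 := by
      rintro rfl
      simp at h2
    by_cases hs : ∃ β, α = β + 1
    · obtain ⟨β, rfl⟩ := hs
      rcases h2.eq_or_lt with he | hlt
      · rw [← he]
        exact sq_lt_fgh_two x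
      · have hβ : β < β + 1 := Order.lt_add_one_iff.2 le_rfl
        rw [fgh_succ]
        exact (ih β hβ (hβ.trans hα) (Order.lt_add_one_iff.1 hlt)).trans_le
          (le_iterate_succ (fun y => (lt_fgh β (hβ.trans hα) y).le) x x)
    · obtain ⟨hl, hb⟩ := fundSeq_spec α hα h0 hs x
      rw [fgh_limit hα h0 hs]
      exact ih _ hl (hl.trans hα) (hb hx)

lemma opow_lt_eps0 {a : Ordinal.{0}} (h : a < eps0) : omega0 ^ a < eps0 := by
  have hn : Order.IsNormal (fun a : Ordinal.{0} => omega0 ^ a) :=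
    Ordinal.isNormal_opow Ordinal.one_lt_omega0
  exact (Ordinal.apply_lt_nfp hn).2 h

lemma omegaTower_lt_eps0 (m : ℕ) : omegaTower m 1 < eps0 := by
  induction m with
  | zero =>
    have h0 : (0 : Ordinal.{0}) < eps0 := by
      have := Ordinal.iterate_le_nfp (fun a : Ordinal.{0} => omega0 ^ a) 0 1
      simp only [Function.iterate_one, Ordinal.opow_zero] at this
      exact zero_lt_one.trans_le this
    simpa [omegaTower] using opow_lt_eps0 h0
  | succ m ih => exact opow_lt_eps0 ih

lemma two_le_omegaTower (m : ℕ) : 2 ≤ omegaTower (m + 1) 1 := by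
  have h1 : ∀ k, 1 ≤ omegaTower k 1 := by
    intro k
    cases k with
    | zero => exact le_rfl
    | succ k => exact Order.one_le_iff_pos.2 (Ordinal.opow_pos _ Ordinal.omega0_pos)
  calc (2 : Ordinal.{0}) ≤ omega0 := by exact_mod_cast (Ordinal.natCast_lt_omega0 2).le
    _ = omega0 ^ (1 : Ordinal.{0}) := (Ordinal.opow_one _).symm
    _ ≤ omegaTower (m + 1) 1 := Ordinal.opow_le_opow_right Ordinal.omega0_pos (h1 m)

lemma sq_lt_slowFeps0 (x : ℕ) : x ^ 2 < slowFeps0 x := by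
  rcases Nat.eq_zero_or_pos x with rfl | hx
  · exact lt_fgh _ (omegaTower_lt_eps0 _) 0
  · exact sq_lt_fgh _ (omegaTower_lt_eps0 _) (two_le_omegaTower _) x hx

lemma sq_lt_slowF (α : Ordinal.{0}) (hα : α < eps0) (n : ℕ) : n ^ 2 < slowF α n := by
  induction α using WellFoundedLT.induction generalizing n with
  | ind α ih =>
    rw [slowF]
    split_ifs with h0 hs
    · exact sq_lt_slowFeps0 n
    · have hc := Classical.choose_spec hs
      set β := Classical.choose hs
      have hβ : β < α := by rw [hc]; exact Order.lt_add_one_iff.2 le_rfl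
      have hg := ih β hβ (hβ.trans hα)
      exact (hg n).trans_le
        (le_iterate_succ (fun y => (Nat.le_self_pow two_ne_zero y).trans (hg y).le) n n)
    · have hl := (fundSeq_spec α hα h0 hs n).1
      simp only [dif_pos hl]
      exact ih _ hl (hl.trans hα) n

/-- For every natural number `n` and every ordinal `α < ε₀`, `n ≤ n² < F^⋄_{ε₀+α}(n)`. -/
theorem stmt2 : ∀ (n : ℕ) (α : Ordinal.{0}), α < eps0 → n ≤ n ^ 2 ∧ n ^ 2 < slowF α n := by
  intro n α hα
  exact ⟨Nat.le_self_pow two_ne_zero n, sq_lt_slowF α hα n⟩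

end
end
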